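/- Let U be a strictly positive bounded linear operator on X = L^p(E, μ) with spectral radius r(U) > 0, and let φ₀ ∈ X'₊ \ {0} satisfy U* φ₀ = r(U) φ₀. Then every f ∈ X \ {0} with U f = r(U) f satisfies U |f| = r(U) |f|, and either f > 0 a.e. or −f > 0 a.e. -/

import Mathlib

open MeasureTheory Filter ENNReal

theorem aux_trunc_tendsto
    {α : Type*} [MeasurableSpace α] {μ : Measure α}
    {p : ℝ≥0∞} [Fact (1 ≤ p)] (hp : p ≠ ∞)
    (h k : Lp ℝ p μ) (hh : ∀ᵐ x ∂μ, 0 < h x) (hk : 0 ≤ k) :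
    Tendsto (fun n : ℕ => k ⊓ ((n : ℝ) • h)) atTop (nhds k) := by
  have hp0 : p ≠ 0 := (lt_of_lt_of_le one_pos (Fact.out : 1 ≤ p)).ne'
  have hpr : 0 < p.toReal := ENNReal.toReal_pos hp0 hp
  rw [Lp.tendsto_Lp_iff_tendsto_eLpNorm']
  simp only [eLpNorm_eq_lintegral_rpow_enorm_toReal hp0 hp]
  have hco : ∀ᵐ x ∂μ, ∀ n : ℕ,
      (k ⊓ ((n : ℝ) • h) : Lp ℝ p μ) x = min (k x) (n * h x) := by
    rw [ae_all_iff]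
    intro n
    filter_upwards [Lp.coeFn_inf k ((n : ℝ) • h), Lp.coeFn_smul (n : ℝ) h] with x h1 h2
    rw [h1, Pi.inf_apply, h2, Pi.smul_apply, smul_eq_mul]
  have hk' := (Lp.coeFn_nonneg k).2 hk
  have key : Tendsto (fun n : ℕ => ∫⁻ x,
      ‖((k ⊓ ((n : ℝ) • h) : Lp ℝ p μ) - k : α → ℝ) x‖ₑ ^ p.toReal ∂μ) atTop
      (nhds (∫⁻ _, 0 ∂μ)) := by
    refine tendsto_lintegral_of_dominated_convergence' (fun x => ‖k x‖ₑ ^ p.toReal) ?_ ?_ ?_ ?_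
    · intro n
      exact (((Lp.aestronglyMeasurable _).sub (Lp.aestronglyMeasurable _)).enorm).pow_const _
    · intro n
      filter_upwards [hco, hk', hh] with x h1 h2 h3
      refine ENNReal.rpow_le_rpow ?_ hpr.le
      rw [enorm_le_iff_norm_le, Pi.sub_apply, h1 n, Real.norm_eq_abs, Real.norm_eq_abs]
      simp only [Pi.zero_apply] at h2
      have h4 : 0 ≤ (n : ℝ) * h x := by positivity
      have h5 : 0 ≤ min (k x) (n * h x) := le_min h2 h4
      rw [abs_of_nonneg h2, abs_le]
      constructor <;> linarith [min_le_left (k x) (n * h x)]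
    · exact (lintegral_rpow_enorm_lt_top_of_eLpNorm_lt_top hp0 hp (Lp.eLpNorm_lt_top k)).ne
    · filter_upwards [hco, hk', hh] with x h1 h2 h3
      obtain ⟨N, hN⟩ := exists_nat_ge (k x / h x)
      refine tendsto_const_nhds.congr' ?_
      filter_upwards [eventually_ge_atTop N] with n hn
      have hn' : (N : ℝ) ≤ n := by exact_mod_cast hn
      have : k x ≤ n * h x := by
        rw [← div_le_iff₀ h3]; linarith
      rw [Pi.sub_apply, h1 n, min_eq_left this, sub_self, enorm_zero, ENNReal.zero_rpow_of_pos hpr]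
  rw [lintegral_zero] at key
  have := key.ennrpow_const (1 / p.toReal)
  rwa [ENNReal.zero_rpow_of_pos (by positivity)] at this

theorem aux_functional_pos
    {α : Type*} [MeasurableSpace α] {μ : Measure α}
    {p : ℝ≥0∞} [Fact (1 ≤ p)] (hp : p ≠ ∞)
    (φ₀ : Lp ℝ p μ →L[ℝ] ℝ) (hφ₀pos : ∀ f, 0 ≤ f → 0 ≤ φ₀ f)
    (h : Lp ℝ p μ) (hh : ∀ᵐ x ∂μ, 0 < h x) (hz : φ₀ h = 0) : φ₀ = 0 := by
  have hpos : ∀ k : Lp ℝ p μ, 0 ≤ k → φ₀ k = 0 := by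
    intro k hk
    refine le_antisymm ?_ (hφ₀pos k hk)
    have ht := (φ₀.continuous.tendsto k).comp (aux_trunc_tendsto hp h k hh hk)
    refine le_of_tendsto' ht fun n => ?_
    have h1 := hφ₀pos ((n : ℝ) • h - k ⊓ ((n : ℝ) • h)) (sub_nonneg.2 inf_le_right)
    rw [map_sub, map_smul, hz, smul_zero] at h1
    simp only [Function.comp_apply]
    linarith
  ext f
  have h1 := hpos |f| (abs_nonneg f)
  have h2 := hpos (|f| - f) (sub_nonneg.2 (le_abs_self f))
  rw [map_sub, h1] at h2
  simp only [zero_apply, _root_.ContinuousLinearMap.zero_apply]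
  linarith

/-- **From the proof of Theorem 2.2 ii).**  Let `U` be a strictly positive bounded operator
on `X = L^p(E, μ)` with spectral radius `r(U) > 0` (Gelfand formula), and let
`φ₀ ∈ X'₊ \ {0}` satisfy `U* φ₀ = r(U) φ₀`.  Then every `f ≠ 0` with `U f = r(U) f`
satisfies `U |f| = r(U) |f|`, and either `f > 0` a.e. or `-f > 0` a.e. -/
theorem eigenfunction_abs_and_sign
    {α : Type*} [MeasurableSpace α] {μ : Measure α} [SigmaFinite μ]
    {p : ℝ≥0∞} [Fact (1 ≤ p)] (hp : p ≠ ∞)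
    (U : Lp ℝ p μ →L[ℝ] Lp ℝ p μ)
    (hstrict : ∀ f : Lp ℝ p μ, 0 ≤ f → f ≠ 0 → ∀ᵐ x ∂μ, 0 < (U f) x)
    (r : ℝ) (hr : Tendsto (fun n : ℕ => ‖U ^ n‖ ^ (1 / (n : ℝ))) atTop (nhds r))
    (hr0 : 0 < r)
    (φ₀ : Lp ℝ p μ →L[ℝ] ℝ) (hφ₀pos : ∀ f, 0 ≤ f → 0 ≤ φ₀ f) (hφ₀ne : φ₀ ≠ 0)
    (hφ₀ : ∀ f, φ₀ (U f) = r * φ₀ f) :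
    ∀ f : Lp ℝ p μ, f ≠ 0 → U f = r • f →
      U |f| = r • |f| ∧ ((∀ᵐ x ∂μ, 0 < f x) ∨ (∀ᵐ x ∂μ, f x < 0)) := by
  intro f hf hUf
  have hUpos : ∀ h : Lp ℝ p μ, 0 ≤ h → 0 ≤ U h := by
    intro h hh
    by_cases h0 : h = 0
    · rw [h0, map_zero]
    · rw [← Lp.coeFn_nonneg]
      filter_upwards [hstrict h hh h0] with x hx using hx.le
  have habs : |r • f| = r • |f| := by
    apply Lp.ext
    filter_upwards [Lp.coeFn_abs (r • f), Lp.coeFn_smul r f, Lp.coeFn_smul r |f|,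
      Lp.coeFn_abs f] with x h1 h2 h3 h4
    rw [h1, h2, h3, Pi.smul_apply, Pi.smul_apply, h4, smul_eq_mul, smul_eq_mul, abs_mul,
      abs_of_pos hr0]
  have hle : r • |f| ≤ U |f| := by
    rw [← habs, ← hUf, abs_le']
    constructor
    · have := hUpos (|f| - f) (sub_nonneg.2 (le_abs_self f))
      rwa [map_sub, sub_nonneg] at this
    · have := hUpos (|f| - -f) (sub_nonneg.2 (neg_le_abs f))
      rwa [map_sub, sub_nonneg, map_neg] at this
  have hE : U |f| = r • |f| := by
    by_contra hne
    have hg0 : U |f| - r • |f| ≠ 0 := sub_ne_zero.2 hne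
    refine hφ₀ne (aux_functional_pos hp φ₀ hφ₀pos _ (hstrict _ (sub_nonneg.2 hle) hg0) ?_)
    rw [hφ₀, map_sub, map_smul, hφ₀, smul_eq_mul, sub_self, mul_zero]
  refine ⟨hE, ?_⟩
  by_cases h0 : |f| + f = 0
  · right
    have h1 : |f| - f ≠ 0 := by
      intro h1
      apply hf
      have h2 : |f| = f := sub_eq_zero.1 h1
      rw [h2, ← two_smul ℝ f] at h0
      exact (smul_eq_zero.1 h0).resolve_left two_ne_zero
    have h2 := hstrict _ (sub_nonneg.2 (le_abs_self f)) h1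
    rw [map_sub, hE, hUf, ← smul_sub] at h2
    filter_upwards [h2, Lp.coeFn_smul r (|f| - f), Lp.coeFn_sub |f| f, Lp.coeFn_abs f]
      with x a b c d
    rw [b, Pi.smul_apply, c, Pi.sub_apply, d, smul_eq_mul] at a
    have := pos_of_mul_pos_right a hr0.le
    by_contra hc
    rw [abs_of_nonneg (not_lt.1 hc)] at this
    linarith
  · left
    have h2 := hstrict (|f| + f) (by
      have := neg_le_abs f
      exact neg_le_iff_add_nonneg.1 this) h0
    rw [map_add, hE, hUf, ← smul_add] at h2
    filter_upwards [h2, Lp.coeFn_smul r (|f| + f), Lp.coeFn_add |f| f, Lp.coeFn_abs f]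
      with x a b c d
    rw [b, Pi.smul_apply, c, Pi.add_apply, d, smul_eq_mul] at a
    have := pos_of_mul_pos_right a hr0.le
    by_contra hc
    rw [abs_of_nonpos (not_lt.1 hc)] at this
    linarith
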